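/- (Per-step expected descent inequality in the proof of Theorem 1.) Let E be a real Hilbert space and L : E → ℝ a differentiable function whose gradient ∇L is Lipschitz continuous with constant L_s > 0. Let η be a step size with 0 < η ≤ 1/(4 L_s). Let (Ω, μ) be a probability space and G : Ω → E a Bochner-integrable random vector with mean ḡ = ∫_Ω G dμ and ∫_Ω ‖G(ω)‖² dμ(ω) < ∞. Fix W ∈ E and suppose ‖ḡ − ∇L(W)‖ ≤ δ and ∫_Ω ‖G(ω) − ḡ‖² dμ(ω) ≤ σ² for reals δ, σ ≥ 0. Then ∫_Ω L(W − η G(ω)) dμ(ω) ≤ L(W) − (η/4)‖∇L(W)‖² + (3η/4)δ² + (L_s η² σ²)/2. -/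

import Mathlib

open MeasureTheory

/-!
Write `m` for the mean of the random gradient `G`. The expected loss after the random step
`W - η • G` is compared with the loss after the averaged step `W - η • m`: the first-order term of
the expansion of `L` at `W - η • m` integrates to zero, so only `(Ls / 2) η²` times the variance
of `G` is lost. The averaged step is an inexact gradient step, for which the quadratic upper bound
and `Ls * η ≤ 1` give
`L (W - η • m) ≤ L W - η ⟪∇L W, m⟫ + (η / 2) ‖m‖² = L W - (η / 2) ‖∇L W‖² + (η / 2) ‖m - ∇L W‖²`.
-/

open Set
open scoped Gradient NNReal

section Taylor

variable {E F : Type*} [NormedAddCommGroup E] [NormedSpace ℝ E]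
  [NormedAddCommGroup F] [NormedSpace ℝ F] {f : E → F} {K : ℝ≥0}

theorem norm_sub_sub_apply_le_of_lipschitzOnWith_hasFDerivWithinAt {f' : E → E →L[ℝ] F}
    {s : Set E} (hs : Convex ℝ s) (hf : ∀ z ∈ s, HasFDerivWithinAt f (f' z) s z)
    (hf' : LipschitzOnWith K f' s) {x y : E} (hx : x ∈ s) (hy : y ∈ s) :
    ‖f y - f x - f' x (y - x)‖ ≤ K / 2 * ‖y - x‖ ^ 2 := by
  let γ : ℝ → E := AffineMap.lineMap x y
  let r : ℝ → F := fun t ↦ f (γ t) - f x - t • f' x (y - x)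
  have hγ : MapsTo γ (Icc 0 1) s := fun t ht ↦ hs.lineMap_mem hx hy ht
  have hr : ∀ t ∈ Icc (0 : ℝ) 1,
      HasDerivWithinAt r ((f' (γ t) - f' x) (y - x)) (Icc 0 1) t := fun t ht ↦ by
    have hfγ : HasDerivWithinAt (f ∘ γ) (f' (γ t) (y - x)) (Icc 0 1) t :=
      (hf (γ t) (hγ ht)).comp_hasDerivWithinAt t AffineMap.hasDerivWithinAt_lineMap hγ
    simpa [r] using!
      (hfγ.sub_const (f x)).sub ((hasDerivWithinAt_id t _).smul_const (f' x (y - x)))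
  have hr_bound : ∀ t ∈ Ico (0 : ℝ) 1,
      ‖(f' (γ t) - f' x) (y - x)‖ ≤ K * ‖y - x‖ ^ 2 * t := fun t ht ↦
    calc ‖(f' (γ t) - f' x) (y - x)‖
      _ ≤ ‖f' (γ t) - f' x‖ * ‖y - x‖ := ContinuousLinearMap.le_opNorm _ _
      _ ≤ K * ‖γ t - x‖ * ‖y - x‖ := by
        gcongr
        exact hf'.norm_sub_le (hγ (Ico_subset_Icc_self ht)) hx
      _ = K * ‖y - x‖ ^ 2 * t := by
        have hγx : ‖γ t - x‖ = t * ‖y - x‖ := by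
          simp [γ, AffineMap.lineMap_apply, norm_smul, abs_of_nonneg ht.1]
        rw [hγx]
        ring
  have hB : ∀ t : ℝ, HasDerivAt (fun t ↦ K / 2 * ‖y - x‖ ^ 2 * t ^ 2) (K * ‖y - x‖ ^ 2 * t) t :=
    fun t ↦ ((hasDerivAt_pow 2 t).const_mul _).congr_deriv (by ring)
  have hr_one : ‖r 1‖ ≤ K / 2 * ‖y - x‖ ^ 2 * 1 ^ 2 :=
    image_norm_le_of_norm_deriv_right_le_deriv_boundary (fun t ht ↦ (hr t ht).continuousWithinAt)
      (fun t ht ↦ (hr t (Ico_subset_Icc_self ht)).mono_of_mem_nhdsWithin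
        (Icc_mem_nhdsGE_of_mem ht))
      (by simp [r, γ]) hB hr_bound (right_mem_Icc.2 zero_le_one)
  simpa [r, γ] using hr_one

theorem norm_sub_sub_fderiv_le_of_lipschitzWith (hf : Differentiable ℝ f)
    (hf' : LipschitzWith K (fderiv ℝ f)) (x y : E) :
    ‖f y - f x - fderiv ℝ f x (y - x)‖ ≤ K / 2 * ‖y - x‖ ^ 2 :=
  norm_sub_sub_apply_le_of_lipschitzOnWith_hasFDerivWithinAt convex_univ
    (fun z _ ↦ (hf z).hasFDerivAt.hasFDerivWithinAt) hf'.lipschitzOnWith (mem_univ x) (mem_univ y)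

variable {Ω : Type*} [MeasurableSpace Ω] {μ : Measure Ω} {X : Ω → E}

theorem integrable_comp_of_lipschitzWith_fderiv [IsFiniteMeasure μ] (hf : Differentiable ℝ f)
    (hf' : LipschitzWith K (fderiv ℝ f)) (hX : MemLp X 2 μ) :
    Integrable (fun ω ↦ f (X ω)) μ := by
  have hlin : Integrable (fun ω ↦ f 0 + fderiv ℝ f 0 (X ω)) μ :=
    (integrable_const _).add ((fderiv ℝ f 0).integrable_comp (hX.integrable one_le_two))
  have hrem : Integrable (fun ω ↦ f (X ω) - (f 0 + fderiv ℝ f 0 (X ω))) μ := by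
    refine ((hX.integrable_norm_pow two_ne_zero).const_mul (K / 2 : ℝ)).mono'
      ((hf.continuous.comp_aestronglyMeasurable hX.1).sub hlin.1) (.of_forall fun ω ↦ ?_)
    simpa [sub_sub] using norm_sub_sub_fderiv_le_of_lipschitzWith hf hf' 0 (X ω)
  exact (hrem.add hlin).congr (.of_forall fun ω ↦ sub_add_cancel _ _)

theorem norm_integral_comp_sub_le_of_lipschitzWith_fderiv [CompleteSpace E] [CompleteSpace F]
    [IsProbabilityMeasure μ] (hf : Differentiable ℝ f) (hf' : LipschitzWith K (fderiv ℝ f))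
    (hX : MemLp X 2 μ) :
    ‖∫ ω, f (X ω) ∂μ - f (∫ ω, X ω ∂μ)‖ ≤ K / 2 * ∫ ω, ‖X ω - ∫ ω', X ω' ∂μ‖ ^ 2 ∂μ := by
  set m := ∫ ω, X ω ∂μ with hm
  have hX_int : Integrable X μ := hX.integrable one_le_two
  have hXm : Integrable (fun ω ↦ X ω - m) μ := hX_int.sub (integrable_const m)
  have hfX : Integrable (fun ω ↦ f (X ω) - f m) μ :=
    (integrable_comp_of_lipschitzWith_fderiv hf hf' hX).sub (integrable_const _)
  have hlin : ∫ ω, fderiv ℝ f m (X ω - m) ∂μ = 0 := by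
    rw [(fderiv ℝ f m).integral_comp_comm hXm, integral_sub hX_int (integrable_const m)]
    simp [hm]
  calc ‖∫ ω, f (X ω) ∂μ - f m‖
    _ = ‖∫ ω, (f (X ω) - f m - fderiv ℝ f m (X ω - m)) ∂μ‖ := by
      rw [integral_sub hfX ((fderiv ℝ f m).integrable_comp hXm), hlin, sub_zero,
        integral_sub (integrable_comp_of_lipschitzWith_fderiv hf hf' hX) (integrable_const _)]
      simp
    _ ≤ ∫ ω, K / 2 * ‖X ω - m‖ ^ 2 ∂μ :=
      norm_integral_le_of_norm_le
        (((hX.sub (memLp_const m)).integrable_norm_pow two_ne_zero).const_mul _)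
        (.of_forall fun ω ↦ norm_sub_sub_fderiv_le_of_lipschitzWith hf hf' m (X ω))
    _ = K / 2 * ∫ ω, ‖X ω - m‖ ^ 2 ∂μ := integral_const_mul _ _

end Taylor

section Gradient

variable {E : Type*} [NormedAddCommGroup E] [InnerProductSpace ℝ E] [CompleteSpace E]
  {f : E → ℝ} {K : ℝ≥0}

theorem lipschitzWith_fderiv_iff_gradient :
    LipschitzWith K (fderiv ℝ f) ↔ LipschitzWith K (∇ f) := by
  rw [← toDual_comp_gradient]
  exact (InnerProductSpace.toDual ℝ E).isometry.lipschitzWith_iff K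

theorem apply_sub_smul_le_of_lipschitzWith_gradient (hf : Differentiable ℝ f)
    (hf' : LipschitzWith K (∇ f)) {η : ℝ} (hη : 0 ≤ η) (hKη : K * η ≤ 1) (x v : E) :
    f (x - η • v) ≤ f x - η / 2 * ‖∇ f x‖ ^ 2 + η / 2 * ‖v - ∇ f x‖ ^ 2 := by
  have hquad : f (x - η • v) - f x + η * inner ℝ (∇ f x) v ≤ K / 2 * (η * ‖v‖) ^ 2 := by
    simpa [← inner_gradient_left, inner_smul_right, norm_smul, abs_of_nonneg hη] using
      (le_abs_self _).trans (norm_sub_sub_fderiv_le_of_lipschitzWith hf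
        (lipschitzWith_fderiv_iff_gradient.2 hf') x (x - η • v))
  have hstep : K / 2 * (η * ‖v‖) ^ 2 ≤ η / 2 * ‖v‖ ^ 2 :=
    calc K / 2 * (η * ‖v‖) ^ 2
      _ = K * η * (η / 2 * ‖v‖ ^ 2) := by ring
      _ ≤ η / 2 * ‖v‖ ^ 2 := mul_le_of_le_one_left (by positivity) hKη
  rw [norm_sub_sq_real, real_inner_comm]
  linarith

theorem integral_apply_sub_smul_le_of_lipschitzWith_gradient {Ω : Type*} [MeasurableSpace Ω]
    {μ : Measure Ω} [IsProbabilityMeasure μ] (hf : Differentiable ℝ f)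
    (hf' : LipschitzWith K (∇ f)) {G : Ω → E} (hG : MemLp G 2 μ) (η : ℝ) (x : E) :
    ∫ ω, f (x - η • G ω) ∂μ ≤ f (x - η • ∫ ω, G ω ∂μ) +
      K * η ^ 2 * (∫ ω, ‖G ω - ∫ ω', G ω' ∂μ‖ ^ 2 ∂μ) / 2 := by
  have hmean : ∫ ω, (x - η • G ω) ∂μ = x - η • ∫ ω, G ω ∂μ := by
    rw [integral_sub (integrable_const x) ((hG.integrable one_le_two).fun_smul η), integral_smul]
    simp
  have hdev : ∀ ω, ‖x - η • G ω - (x - η • ∫ ω', G ω' ∂μ)‖ ^ 2 =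
      η ^ 2 * ‖G ω - ∫ ω', G ω' ∂μ‖ ^ 2 := fun ω ↦ by
    rw [sub_sub_sub_cancel_left, ← smul_sub, norm_smul, mul_pow, Real.norm_eq_abs, sq_abs,
      norm_sub_rev]
  have hgap := (le_abs_self _).trans <| norm_integral_comp_sub_le_of_lipschitzWith_fderiv hf
    (lipschitzWith_fderiv_iff_gradient.2 hf') ((memLp_const x).sub (hG.const_smul η))
  simp only [Pi.sub_apply, Pi.smul_apply, hmean, hdev, integral_const_mul] at hgap
  linarith

end Gradient

theorem per_step_expected_descent_general
    {E : Type*} [NormedAddCommGroup E] [InnerProductSpace ℝ E] [CompleteSpace E]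
    {L : E → ℝ} {Ls : ℝ} (hLs : 0 ≤ Ls)
    (hdiff : Differentiable ℝ L)
    (hLip : ∀ x y : E, ‖∇ L x - ∇ L y‖ ≤ Ls * ‖x - y‖)
    {η : ℝ} (hη : 0 ≤ η) (hLsη : Ls * η ≤ 1)
    {Ω : Type*} [MeasurableSpace Ω] {μ : Measure Ω} [IsProbabilityMeasure μ]
    {G : Ω → E} (hG : Integrable G μ)
    (hG2 : Integrable (fun ω ↦ ‖G ω‖ ^ 2) μ)
    {W : E} {δ σ : ℝ}
    (hbias : ‖(∫ ω, G ω ∂μ) - ∇ L W‖ ≤ δ)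
    (hvar : ∫ ω, ‖G ω - ∫ ω', G ω' ∂μ‖ ^ 2 ∂μ ≤ σ ^ 2) :
    ∫ ω, L (W - η • G ω) ∂μ ≤
      L W - η / 2 * ‖∇ L W‖ ^ 2 + η / 2 * δ ^ 2 + Ls * η ^ 2 * σ ^ 2 / 2 := by
  lift Ls to ℝ≥0 using hLs
  have hLipW : LipschitzWith Ls (∇ L) :=
    .of_dist_le_mul (by simpa only [dist_eq_norm] using hLip)
  have hGL2 : MemLp G 2 μ := (memLp_two_iff_integrable_sq_norm hG.1).2 hG2
  calc ∫ ω, L (W - η • G ω) ∂μ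
    _ ≤ L (W - η • ∫ ω, G ω ∂μ) +
        Ls * η ^ 2 * (∫ ω, ‖G ω - ∫ ω', G ω' ∂μ‖ ^ 2 ∂μ) / 2 :=
      integral_apply_sub_smul_le_of_lipschitzWith_gradient hdiff hLipW hGL2 η W
    _ ≤ L W - η / 2 * ‖∇ L W‖ ^ 2 + η / 2 * ‖(∫ ω, G ω ∂μ) - ∇ L W‖ ^ 2 +
        Ls * η ^ 2 * (∫ ω, ‖G ω - ∫ ω', G ω' ∂μ‖ ^ 2 ∂μ) / 2 := by
      gcongr
      exact apply_sub_smul_le_of_lipschitzWith_gradient hdiff hLipW hη hLsη W _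
    _ ≤ L W - η / 2 * ‖∇ L W‖ ^ 2 + η / 2 * δ ^ 2 + Ls * η ^ 2 * σ ^ 2 / 2 := by
      gcongr

theorem per_step_expected_descent
    {E : Type*} [NormedAddCommGroup E] [InnerProductSpace ℝ E] [CompleteSpace E]
    (L : E → ℝ) (Ls : ℝ) (hLs : 0 < Ls)
    (hdiff : Differentiable ℝ L)
    (hLip : ∀ x y : E, ‖gradient L x - gradient L y‖ ≤ Ls * ‖x - y‖)
    (η : ℝ) (hη : 0 < η) (hη' : η ≤ 1 / (4 * Ls))
    {Ω : Type*} [MeasurableSpace Ω] (μ : Measure Ω) [IsProbabilityMeasure μ]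
    (G : Ω → E) (hG : Integrable G μ)
    (hG2 : Integrable (fun ω => ‖G ω‖ ^ 2) μ)
    (W : E) (δ σ : ℝ) (hδ : 0 ≤ δ) (hσ : 0 ≤ σ)
    (hbias : ‖(∫ ω, G ω ∂μ) - gradient L W‖ ≤ δ)
    (hvar : ∫ ω, ‖G ω - ∫ ω', G ω' ∂μ‖ ^ 2 ∂μ ≤ σ ^ 2)
    (hLint : Integrable (fun ω => L (W - η • G ω)) μ) :
    ∫ ω, L (W - η • G ω) ∂μ ≤
      L W - (η / 4) * ‖gradient L W‖ ^ 2 + (3 * η / 4) * δ ^ 2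
        + Ls * η ^ 2 * σ ^ 2 / 2 := by
  have hLsη : Ls * η ≤ 1 := by
    linarith [(le_div_iff₀ (by positivity)).1 hη', mul_pos hLs hη]
  exact (per_step_expected_descent_general hLs.le hdiff hLip hη.le hLsη hG hG2 hbias hvar).trans
    (by gcongr _ - ?_ * _ + ?_ * _ + _ <;> linarith)
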